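/- Let Z be a real vector space, let V, W ⊆ Z be subspaces with V ∩ W = {0}, let V′ be a real vector space, and let λ : V → V′ be a linear isomorphism. Inside V′ ⊗ ∧²Z define Ẽ₂ := span{ v′ ⊗ (w ∧ v) − λ(v) ⊗ (w ∧ λ⁻¹(v′)) : v′ ∈ V′, v ∈ V, w ∈ W }, Ẽ₀ := span{ v′ ⊗ (w ∧ v) + λ(v) ⊗ (w ∧ λ⁻¹(v′)) : v′ ∈ V′, v ∈ V, w ∈ W }, Ẽ′₃ := span{ v′ ⊗ (v₁ ∧ v₂) − λ(v₁) ⊗ (λ⁻¹(v′) ∧ v₂) + λ(v₂) ⊗ (λ⁻¹(v′) ∧ v₁) : v′ ∈ V′, v₁, v₂ ∈ V }, and Ẽ′₀ := span{ −2 v′ ⊗ (v₁ ∧ v₂) − λ(v₁) ⊗ (λ⁻¹(v′) ∧ v₂) + λ(v₂) ⊗ (λ⁻¹(v′) ∧ v₁) : v′ ∈ V′, v₁, v₂ ∈ V }. Then V′ ⊗ (W ∧ V) = Ẽ₂ ⊕ Ẽ₀ and V′ ⊗ (V ∧ V) = Ẽ′₃ ⊕ Ẽ′₀. -/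

import Mathlib

open TensorProduct

/-- The second exterior power `⋀[ℝ]^2 Z` of a real vector space `Z`, viewed as a submodule
of the exterior algebra of `Z`. -/
noncomputable def extPow2 (Z : Type*) [AddCommGroup Z] [Module ℝ Z] :
    Submodule ℝ (ExteriorAlgebra ℝ Z) := ⋀[ℝ]^2 Z

/-- The wedge product `w ∧ u` of two vectors, as an element of the second exterior power. -/
noncomputable def wedge {Z : Type*} [AddCommGroup Z] [Module ℝ Z] (w u : Z) :
    ↥(extPow2 Z) :=
  ⟨ExteriorAlgebra.ιMulti ℝ 2 ![w, u],
    ExteriorAlgebra.ιMulti_range ℝ 2 (Set.mem_range_self _)⟩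

/-!
Extend `λ` to a linear map `p : Z → V'` that vanishes on `W`, and let `T` be the endomorphism
`a ⊗ (y ∧ z) ↦ p y ⊗ (λ⁻¹ a ∧ z) - p z ⊗ (λ⁻¹ a ∧ y)` of `V' ⊗ ⋀²Z`. It preserves
`V' ⊗ (W ∧ V)`, where `T² = 1`, and `V' ⊗ (V ∧ V)`, where `(T - 1) (T + 2) = 0`. The generators of
`Ẽ₂` and `Ẽ₀` are `x - T x` and `x + T x`, those of `Ẽ′₃` and `Ẽ′₀` are `x - T x` and `-2 x - T x`,
so the two decompositions are the eigenspace decompositions of `T`.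
-/

section Quadratic

variable {R M : Type*} [CommRing R] [AddCommGroup M] [Module R M]
  {T : Module.End R M} {N : Submodule R M} {c d : R}

theorem eq_map_algebraMap_sub_sup_map (hcd : IsUnit (c - d)) (hT : N ≤ N.comap T) :
    N = N.map (algebraMap R (Module.End R M) c - T) ⊔
      N.map (algebraMap R (Module.End R M) d - T) := by
  have map_le (e : R) : N.map (algebraMap R (Module.End R M) e - T) ≤ N :=
    Submodule.map_le_iff_le_comap.mpr fun _ hx => N.sub_mem (N.smul_mem e hx) (hT hx)
  refine le_antisymm (fun x hx => ?_) (sup_le (map_le c) (map_le d))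
  have difference : (c - d) • x =
      (algebraMap R (Module.End R M) c - T) x - (algebraMap R (Module.End R M) d - T) x := by
    simp only [LinearMap.sub_apply, Module.algebraMap_end_apply]
    module
  rw [← Submodule.smul_mem_iff_of_isUnit _ hcd, difference]
  exact Submodule.sub_mem _
    (Submodule.mem_sup_left (Submodule.mem_map_of_mem hx))
    (Submodule.mem_sup_right (Submodule.mem_map_of_mem hx))

theorem disjoint_map_algebraMap_sub (hcd : IsUnit (c - d))
    (hT : ∀ x ∈ N, T (T x) = (c + d) • T x - (c * d) • x) :
    Disjoint (N.map (algebraMap R (Module.End R M) c - T))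
      (N.map (algebraMap R (Module.End R M) d - T)) := by
  rw [Submodule.disjoint_def]
  rintro z ⟨x, hx, hxz⟩ ⟨y, hy, hyz⟩
  rw [LinearMap.sub_apply, Module.algebraMap_end_apply] at hxz hyz
  have eigen_d : T z = d • z := by
    rw [← hxz, map_sub, map_smul, hT x hx]
    module
  have eigen_c : T z = c • z := by
    rw [← hyz, map_sub, map_smul, hT y hy]
    module
  rw [← hcd.smul_eq_zero, sub_smul, ← eigen_c, ← eigen_d, sub_self]

end Quadratic

section Wedge

variable {R Z N : Type*} [CommRing R] [AddCommGroup Z] [Module R Z] [AddCommGroup N] [Module R N]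

/-- The wedge product `y ∧ z` as a bilinear map into the second exterior power. -/
noncomputable def wedgeBilin (R Z : Type*) [CommRing R] [AddCommGroup Z] [Module R Z] :
    Z →ₗ[R] Z →ₗ[R] ⋀[R]^2 Z :=
  LinearMap.mk₂ R (fun y z => exteriorPower.ιMulti R 2 ![y, z])
    (fun _ _ _ => Subtype.ext <| by simp [ExteriorAlgebra.ιMulti_apply, add_mul])
    (fun _ _ _ => Subtype.ext <| by simp [ExteriorAlgebra.ιMulti_apply])
    (fun _ _ _ => Subtype.ext <| by simp [ExteriorAlgebra.ιMulti_apply, mul_add])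
    (fun _ _ _ => Subtype.ext <| by simp [ExteriorAlgebra.ιMulti_apply])

theorem wedgeBilin_swap (y z : Z) : wedgeBilin R Z y z = -wedgeBilin R Z z y :=
  Subtype.ext <| eq_neg_of_add_eq_zero_left <| by
    simp [wedgeBilin, ExteriorAlgebra.ιMulti_apply]

/-- The alternating map `(y, z) ↦ f y z - f z y` attached to a bilinear map `f`. -/
def antisymmetrization (f : Z →ₗ[R] Z →ₗ[R] N) : Z [⋀^Fin 2]→ₗ[R] N where
  toFun m := f (m 0) (m 1) - f (m 1) (m 0)
  map_update_add' m i x y := by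
    fin_cases i <;> simp <;> abel
  map_update_smul' m i r x := by
    fin_cases i <;> simp [smul_sub]
  map_eq_zero_of_eq' m i j h hij := by
    fin_cases i <;> fin_cases j <;> simp_all

/-- The linear map on the second exterior power sending `y ∧ z` to `f y z - f z y`. -/
noncomputable def wedgeLift (f : Z →ₗ[R] Z →ₗ[R] N) : ⋀[R]^2 Z →ₗ[R] N :=
  exteriorPower.alternatingMapLinearEquiv (antisymmetrization f)

@[simp]
theorem wedgeLift_wedgeBilin (f : Z →ₗ[R] Z →ₗ[R] N) (y z : Z) :
    wedgeLift f (wedgeBilin R Z y z) = f y z - f z y :=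
  exteriorPower.alternatingMapLinearEquiv_apply_ιMulti (antisymmetrization f) ![y, z]

end Wedge

section Tensors

variable {R Z : Type*} (V' : Type*) [CommRing R] [AddCommGroup Z] [Module R Z]
  [AddCommGroup V'] [Module R V'] (V W : Submodule R Z)

/-- The submodule `V' ⊗ (W ∧ V)` of `V' ⊗ ⋀²Z`. -/
def mixedTensors : Submodule R (V' ⊗[R] ⋀[R]^2 Z) :=
  Submodule.span R {x | ∃ a : V', ∃ w ∈ W, ∃ v : V, x = a ⊗ₜ[R] wedgeBilin R Z w v}

/-- The submodule `V' ⊗ (V ∧ V)` of `V' ⊗ ⋀²Z`. -/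
def pureTensors : Submodule R (V' ⊗[R] ⋀[R]^2 Z) :=
  Submodule.span R {x | ∃ a : V', ∃ v₁ v₂ : V, x = a ⊗ₜ[R] wedgeBilin R Z v₁ v₂}

end Tensors

section Parts

variable {R Z V' : Type*} [CommRing R] [AddCommGroup Z] [Module R Z]
  [AddCommGroup V'] [Module R V'] {V : Submodule R Z} (W : Submodule R Z)

/-- The submodule `Ẽ₂` of `V' ⊗ (W ∧ V)`: once `V'` is identified with `V`, the tensors that are
skew in the two arguments from `V`. -/
def skewPart (lam : V ≃ₗ[R] V') : Submodule R (V' ⊗[R] ⋀[R]^2 Z) :=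
  Submodule.span R {x | ∃ a : V', ∃ v : V, ∃ w ∈ W,
    x = a ⊗ₜ[R] wedgeBilin R Z w v - lam v ⊗ₜ[R] wedgeBilin R Z w (lam.symm a)}

/-- The submodule `Ẽ₀` of `V' ⊗ (W ∧ V)`: once `V'` is identified with `V`, the tensors that are
symmetric in the two arguments from `V`. -/
def symmPart (lam : V ≃ₗ[R] V') : Submodule R (V' ⊗[R] ⋀[R]^2 Z) :=
  Submodule.span R {x | ∃ a : V', ∃ v : V, ∃ w ∈ W,
    x = a ⊗ₜ[R] wedgeBilin R Z w v + lam v ⊗ₜ[R] wedgeBilin R Z w (lam.symm a)}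

/-- The submodule `Ẽ′₃` of `V' ⊗ (V ∧ V)`: once `V'` is identified with `V`, the image of the
totally antisymmetric tensors of degree three. -/
def alternatingPart (lam : V ≃ₗ[R] V') : Submodule R (V' ⊗[R] ⋀[R]^2 Z) :=
  Submodule.span R {x | ∃ a : V', ∃ v₁ v₂ : V,
    x = a ⊗ₜ[R] wedgeBilin R Z v₁ v₂
      - lam v₁ ⊗ₜ[R] wedgeBilin R Z (lam.symm a) v₂
      + lam v₂ ⊗ₜ[R] wedgeBilin R Z (lam.symm a) v₁}

/-- The submodule `Ẽ′₀` of `V' ⊗ (V ∧ V)`: once `V'` is identified with `V`, its generators are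
killed by total antisymmetrization and have the symmetry type of the hook partition `(2, 1)`. -/
def hookPart (lam : V ≃ₗ[R] V') : Submodule R (V' ⊗[R] ⋀[R]^2 Z) :=
  Submodule.span R {x | ∃ a : V', ∃ v₁ v₂ : V,
    x = (-2 : R) • (a ⊗ₜ[R] wedgeBilin R Z v₁ v₂)
      - lam v₁ ⊗ₜ[R] wedgeBilin R Z (lam.symm a) v₂
      + lam v₂ ⊗ₜ[R] wedgeBilin R Z (lam.symm a) v₁}

/-- The endomorphism `a ⊗ (y ∧ z) ↦ p y ⊗ (λ⁻¹ a ∧ z) - p z ⊗ (λ⁻¹ a ∧ y)` of `V' ⊗ ⋀²Z`, which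
exchanges the tensor factor `a` with each of the wedge factors in turn. It serves to split
`V' ⊗ (W ∧ V)` and `V' ⊗ (V ∧ V)` into eigenspaces, with `p` an extension of `λ` from `V` to `Z`. -/
noncomputable def exchange (lam : V ≃ₗ[R] V') (p : Z →ₗ[R] V') :
    Module.End R (V' ⊗[R] ⋀[R]^2 Z) :=
  LinearMap.lTensor V' (TensorProduct.lift (wedgeBilin R Z ∘ₗ V.subtype ∘ₗ lam.symm.toLinearMap))
    ∘ₗ (TensorProduct.leftComm R V' V' Z).toLinearMap
    ∘ₗ LinearMap.lTensor V' (wedgeLift (TensorProduct.mk R V' Z ∘ₗ p))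

variable {W} {lam : V ≃ₗ[R] V'} {p : Z →ₗ[R] V'}

theorem exchange_tmul (a : V') (y z : Z) :
    exchange lam p (a ⊗ₜ wedgeBilin R Z y z) =
      p y ⊗ₜ wedgeBilin R Z (lam.symm a) z - p z ⊗ₜ wedgeBilin R Z (lam.symm a) y := by
  simp [exchange, tmul_sub]

theorem exchange_mixed (hpV : ∀ v : V, p v = lam v) (hpW : ∀ w ∈ W, p w = 0)
    (a : V') {w : Z} (hw : w ∈ W) (v : V) :
    exchange lam p (a ⊗ₜ wedgeBilin R Z w v) = lam v ⊗ₜ wedgeBilin R Z w (lam.symm a) := by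
  rw [exchange_tmul, hpW w hw, hpV, zero_tmul, zero_sub, wedgeBilin_swap, tmul_neg, neg_neg]

theorem mixedTensors_le_comap_exchange (hpV : ∀ v : V, p v = lam v) (hpW : ∀ w ∈ W, p w = 0) :
    mixedTensors V' V W ≤ (mixedTensors V' V W).comap (exchange lam p) := by
  refine Submodule.span_le.mpr ?_
  rintro _ ⟨a, w, hw, v, rfl⟩
  exact Submodule.subset_span ⟨lam v, w, hw, lam.symm a, exchange_mixed hpV hpW a hw v⟩

theorem exchange_exchange_of_mem_mixedTensors (hpV : ∀ v : V, p v = lam v)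
    (hpW : ∀ w ∈ W, p w = 0) {x : V' ⊗[R] ⋀[R]^2 Z} (hx : x ∈ mixedTensors V' V W) :
    exchange lam p (exchange lam p x) = x := by
  refine LinearMap.eqOn_span (f := exchange lam p * exchange lam p) (g := 1) ?_ hx
  rintro _ ⟨a, w, hw, v, rfl⟩
  simp [exchange_mixed hpV hpW _ hw]

theorem skewPart_eq_map (hpV : ∀ v : V, p v = lam v) (hpW : ∀ w ∈ W, p w = 0) :
    skewPart W lam = (mixedTensors V' V W).map (1 - exchange lam p) := by
  rw [mixedTensors, Submodule.map_span, skewPart]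
  congr 1
  ext x
  constructor
  · rintro ⟨a, v, w, hw, rfl⟩
    exact ⟨_, ⟨a, w, hw, v, rfl⟩, by simp [exchange_mixed hpV hpW a hw]⟩
  · rintro ⟨_, ⟨a, w, hw, v, rfl⟩, rfl⟩
    exact ⟨a, v, w, hw, by simp [exchange_mixed hpV hpW a hw]⟩

theorem symmPart_eq_map (hpV : ∀ v : V, p v = lam v) (hpW : ∀ w ∈ W, p w = 0) :
    symmPart W lam = (mixedTensors V' V W).map (-1 - exchange lam p) := by
  rw [← neg_add', Submodule.map_neg, mixedTensors, Submodule.map_span, symmPart]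
  congr 1
  ext x
  constructor
  · rintro ⟨a, v, w, hw, rfl⟩
    exact ⟨_, ⟨a, w, hw, v, rfl⟩, by simp [exchange_mixed hpV hpW a hw]⟩
  · rintro ⟨_, ⟨a, w, hw, v, rfl⟩, rfl⟩
    exact ⟨a, v, w, hw, by simp [exchange_mixed hpV hpW a hw]⟩

theorem mixedTensors_eq_sup_and_disjoint (h2 : IsUnit (2 : R))
    (hpV : ∀ v : V, p v = lam v) (hpW : ∀ w ∈ W, p w = 0) :
    mixedTensors V' V W = skewPart W lam ⊔ symmPart W lam ∧
      Disjoint (skewPart W lam) (symmPart W lam) := by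
  have hcd : IsUnit ((1 : R) - -1) := by rwa [show (1 : R) - -1 = 2 by norm_num]
  have hsup := eq_map_algebraMap_sub_sup_map hcd (mixedTensors_le_comap_exchange hpV hpW)
  have hdisj := disjoint_map_algebraMap_sub hcd (N := mixedTensors V' V W) (T := exchange lam p)
    fun x hx => by simp [exchange_exchange_of_mem_mixedTensors hpV hpW hx]
  rw [map_neg, map_one, ← skewPart_eq_map hpV hpW, ← symmPart_eq_map hpV hpW] at hsup hdisj
  exact ⟨hsup, hdisj⟩

theorem exchange_pure (hpV : ∀ v : V, p v = lam v) (a : V') (v₁ v₂ : V) :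
    exchange lam p (a ⊗ₜ wedgeBilin R Z v₁ v₂) =
      lam v₁ ⊗ₜ wedgeBilin R Z (lam.symm a) v₂ - lam v₂ ⊗ₜ wedgeBilin R Z (lam.symm a) v₁ := by
  rw [exchange_tmul, hpV, hpV]

theorem pureTensors_le_comap_exchange (hpV : ∀ v : V, p v = lam v) :
    pureTensors V' V ≤ (pureTensors V' V).comap (exchange lam p) := by
  refine Submodule.span_le.mpr ?_
  rintro _ ⟨a, v₁, v₂, rfl⟩
  rw [SetLike.mem_coe, Submodule.mem_comap, exchange_pure hpV]
  exact Submodule.sub_mem _ (Submodule.subset_span ⟨_, _, _, rfl⟩)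
    (Submodule.subset_span ⟨_, _, _, rfl⟩)

theorem exchange_exchange_of_mem_pureTensors (hpV : ∀ v : V, p v = lam v)
    {x : V' ⊗[R] ⋀[R]^2 Z} (hx : x ∈ pureTensors V' V) :
    exchange lam p (exchange lam p x) = (2 : R) • x - exchange lam p x := by
  refine LinearMap.eqOn_span (f := exchange lam p * exchange lam p)
    (g := (2 : R) • 1 - exchange lam p) ?_ hx
  rintro _ ⟨a, v₁, v₂, rfl⟩
  simp only [Module.End.mul_apply, LinearMap.sub_apply, LinearMap.smul_apply,
    Module.End.one_apply, exchange_pure hpV, map_sub, LinearEquiv.apply_symm_apply,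
    LinearEquiv.symm_apply_apply, wedgeBilin_swap (v₂ : Z) v₁,
    wedgeBilin_swap (v₁ : Z) (lam.symm a), wedgeBilin_swap (v₂ : Z) (lam.symm a), tmul_neg]
  module

theorem alternatingPart_eq_map (hpV : ∀ v : V, p v = lam v) :
    alternatingPart lam = (pureTensors V' V).map (1 - exchange lam p) := by
  rw [pureTensors, Submodule.map_span, alternatingPart]
  congr 1
  ext x
  constructor
  · rintro ⟨a, v₁, v₂, rfl⟩
    exact ⟨_, ⟨a, v₁, v₂, rfl⟩, by simp [exchange_pure hpV, sub_add]⟩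
  · rintro ⟨_, ⟨a, v₁, v₂, rfl⟩, rfl⟩
    exact ⟨a, v₁, v₂, by simp [exchange_pure hpV, sub_add]⟩

theorem hookPart_eq_map (hpV : ∀ v : V, p v = lam v) :
    hookPart lam = (pureTensors V' V).map (-2 - exchange lam p) := by
  rw [pureTensors, Submodule.map_span, hookPart]
  congr 1
  ext x
  constructor
  · rintro ⟨a, v₁, v₂, rfl⟩
    exact ⟨_, ⟨a, v₁, v₂, rfl⟩, by simp [exchange_pure hpV, sub_add, ofNat_smul_eq_nsmul]⟩
  · rintro ⟨_, ⟨a, v₁, v₂, rfl⟩, rfl⟩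
    exact ⟨a, v₁, v₂, by simp [exchange_pure hpV, sub_add, ofNat_smul_eq_nsmul]⟩

theorem pureTensors_eq_sup_and_disjoint (h3 : IsUnit (3 : R)) (hpV : ∀ v : V, p v = lam v) :
    pureTensors V' V = alternatingPart lam ⊔ hookPart lam ∧
      Disjoint (alternatingPart lam) (hookPart lam) := by
  have hcd : IsUnit ((1 : R) - -2) := by rwa [show (1 : R) - -2 = 3 by norm_num]
  have hsup := eq_map_algebraMap_sub_sup_map hcd (pureTensors_le_comap_exchange hpV)
  have hdisj := disjoint_map_algebraMap_sub hcd (N := pureTensors V' V) (T := exchange lam p)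
    fun x hx => by
      rw [exchange_exchange_of_mem_pureTensors hpV hx]
      module
  rw [map_neg, map_one, map_ofNat, ← alternatingPart_eq_map hpV, ← hookPart_eq_map hpV]
    at hsup hdisj
  exact ⟨hsup, hdisj⟩

end Parts

section Field

variable {K Z V' : Type*} [Field K] [AddCommGroup Z] [Module K Z] [AddCommGroup V'] [Module K V']
  {V W : Submodule K Z}

theorem exists_extend_eq_zero_on (hVW : Disjoint V W) (f : V →ₗ[K] V') :
    ∃ p : Z →ₗ[K] V', (∀ v : V, p v = f v) ∧ ∀ w ∈ W, p w = 0 := by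
  obtain ⟨C, hWC, hCV⟩ := hVW.symm.exists_isCompl
  exact ⟨LinearMap.ofIsCompl hCV.symm f 0, fun v => LinearMap.ofIsCompl_apply_left _ v,
    fun w hw => LinearMap.ofIsCompl_apply_right hCV.symm ⟨w, hWC hw⟩⟩

theorem stmt3_general (h2 : (2 : K) ≠ 0) (h3 : (3 : K) ≠ 0) (hVW : Disjoint V W)
    (lam : V ≃ₗ[K] V') :
    (mixedTensors V' V W = skewPart W lam ⊔ symmPart W lam ∧
      Disjoint (skewPart W lam) (symmPart W lam)) ∧
    (pureTensors V' V = alternatingPart lam ⊔ hookPart lam ∧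
      Disjoint (alternatingPart lam) (hookPart lam)) := by
  obtain ⟨p, hpV, hpW⟩ := exists_extend_eq_zero_on hVW lam.toLinearMap
  exact ⟨mixedTensors_eq_sup_and_disjoint h2.isUnit hpV hpW,
    pureTensors_eq_sup_and_disjoint h3.isUnit hpV⟩

end Field

/-- Let `Z` be a real vector space, `V, W ⊆ Z` subspaces with
`V ∩ W = {0}`, `V′` a real vector space and `λ : V → V′` a linear isomorphism.  Inside
`V′ ⊗ ∧²Z` define
`Ẽ₂  = span{ v′ ⊗ (w ∧ v) − λ(v) ⊗ (w ∧ λ⁻¹(v′)) }`,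
`Ẽ₀  = span{ v′ ⊗ (w ∧ v) + λ(v) ⊗ (w ∧ λ⁻¹(v′)) }`,
`Ẽ′₃ = span{ v′ ⊗ (v₁ ∧ v₂) − λ(v₁) ⊗ (λ⁻¹(v′) ∧ v₂) + λ(v₂) ⊗ (λ⁻¹(v′) ∧ v₁) }`,
`Ẽ′₀ = span{ −2 v′ ⊗ (v₁ ∧ v₂) − λ(v₁) ⊗ (λ⁻¹(v′) ∧ v₂) + λ(v₂) ⊗ (λ⁻¹(v′) ∧ v₁) }`.
Then `V′ ⊗ (W ∧ V) = Ẽ₂ ⊕ Ẽ₀` and `V′ ⊗ (V ∧ V) = Ẽ′₃ ⊕ Ẽ′₀`. -/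
theorem stmt3 {Z V' : Type*} [AddCommGroup Z] [Module ℝ Z]
    [AddCommGroup V'] [Module ℝ V']
    (V W : Submodule ℝ Z) (hVW : V ⊓ W = ⊥)
    (lam : ↥V ≃ₗ[ℝ] V')
    (WV' VV' Et2 Et0 Et3' Et0' : Submodule ℝ (V' ⊗[ℝ] ↥(extPow2 Z)))
    (hWV' : WV' = Submodule.span ℝ
      {x | ∃ v' : V', ∃ w ∈ W, ∃ v : ↥V, x = v' ⊗ₜ[ℝ] wedge w (v : Z)})
    (hVV' : VV' = Submodule.span ℝ
      {x | ∃ v' : V', ∃ v₁ v₂ : ↥V, x = v' ⊗ₜ[ℝ] wedge (v₁ : Z) (v₂ : Z)})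
    (hEt2 : Et2 = Submodule.span ℝ
      {x | ∃ v' : V', ∃ v : ↥V, ∃ w ∈ W,
        x = v' ⊗ₜ[ℝ] wedge w (v : Z) - (lam v) ⊗ₜ[ℝ] wedge w ((lam.symm v' : ↥V) : Z)})
    (hEt0 : Et0 = Submodule.span ℝ
      {x | ∃ v' : V', ∃ v : ↥V, ∃ w ∈ W,
        x = v' ⊗ₜ[ℝ] wedge w (v : Z) + (lam v) ⊗ₜ[ℝ] wedge w ((lam.symm v' : ↥V) : Z)})
    (hEt3' : Et3' = Submodule.span ℝ
      {x | ∃ v' : V', ∃ v₁ v₂ : ↥V,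
        x = v' ⊗ₜ[ℝ] wedge (v₁ : Z) (v₂ : Z)
              - (lam v₁) ⊗ₜ[ℝ] wedge ((lam.symm v' : ↥V) : Z) (v₂ : Z)
              + (lam v₂) ⊗ₜ[ℝ] wedge ((lam.symm v' : ↥V) : Z) (v₁ : Z)})
    (hEt0' : Et0' = Submodule.span ℝ
      {x | ∃ v' : V', ∃ v₁ v₂ : ↥V,
        x = (-2 : ℝ) • (v' ⊗ₜ[ℝ] wedge (v₁ : Z) (v₂ : Z))
              - (lam v₁) ⊗ₜ[ℝ] wedge ((lam.symm v' : ↥V) : Z) (v₂ : Z)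
              + (lam v₂) ⊗ₜ[ℝ] wedge ((lam.symm v' : ↥V) : Z) (v₁ : Z)}) :
    (WV' = Et2 ⊔ Et0 ∧ Disjoint Et2 Et0) ∧
    (VV' = Et3' ⊔ Et0' ∧ Disjoint Et3' Et0') := by
  subst hWV' hVV' hEt2 hEt0 hEt3' hEt0'
  exact stmt3_general two_ne_zero three_ne_zero (disjoint_iff.mpr hVW) lam
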